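/- arXiv:2109.06575 — 3 statements merged into one kernel-verified Lean document; each statement's English description precedes it below -/
import Mathlib

section
/- Let μ be a finite measure on a measurable space X, N a positive integer, and s₁, …, s_N : X → ℂ measurable functions such that ρ := N^{−1} ∑_{i=1}^N |s_i|² is strictly positive μ-almost everywhere. Then each function s_i·conj(s_j)/ρ is μ-integrable, the N×N complex matrix G with entries G_{ij} = ∫_X s_i·conj(s_j)·ρ^{−1} dμ is positive semidefinite Hermitian with trace G = N·μ(X), and det G ≤ μ(X)^N. -/
open MeasureTheory Matrix
open scoped ComplexOrder

/-!
Dividing every `s i` by `√ρ` gives functions `u i` with `∑ i, ‖u i‖ ^ 2 = N` wherever `ρ > 0`. They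
are bounded, hence lie in `L²(μ)`, and `G` is the transpose of their Gram matrix there. So `G` is
positive semidefinite, and its trace is the integral of the constant `N`. The determinant and the
trace are the product and the sum of the nonnegative eigenvalues of `G`, so the inequality between
the geometric and arithmetic means gives `det G ≤ (trace G / N) ^ N`.
-/

theorem prod_le_sum_div_card_pow {ι : Type*} (t : Finset ι) (z : ι → ℝ) (hz : ∀ i ∈ t, 0 ≤ z i) :
    ∏ i ∈ t, z i ≤ ((∑ i ∈ t, z i) / t.card) ^ t.card := by
  rcases t.eq_empty_or_nonempty with rfl | ht
  · simp
  have card_ne_zero : t.card ≠ 0 := ht.card_ne_zero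
  have geom_mean_le : (∏ i ∈ t, z i) ^ (t.card : ℝ)⁻¹ ≤ (∑ i ∈ t, z i) / t.card := by
    simpa using Real.geom_mean_le_arith_mean t 1 z (by simp) (by simpa using ht) hz
  have prod_nonneg : 0 ≤ ∏ i ∈ t, z i := Finset.prod_nonneg hz
  calc ∏ i ∈ t, z i = ((∏ i ∈ t, z i) ^ (t.card : ℝ)⁻¹) ^ t.card :=
        (Real.rpow_inv_natCast_pow prod_nonneg card_ne_zero).symm
    _ ≤ ((∑ i ∈ t, z i) / t.card) ^ t.card := by gcongr

theorem det_le_trace_div_card_pow_of_posSemidef {𝕜 ι : Type*} [RCLike 𝕜] [Fintype ι]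
    [DecidableEq ι] {A : Matrix ι ι 𝕜} (hA : A.PosSemidef) :
    A.det ≤ (A.trace / Fintype.card ι) ^ Fintype.card ι := by
  rw [hA.isHermitian.det_eq_prod_eigenvalues, hA.isHermitian.trace_eq_sum_eigenvalues]
  exact_mod_cast prod_le_sum_div_card_pow Finset.univ hA.isHermitian.eigenvalues
    fun i _ => hA.eigenvalues_nonneg i

section L2

variable {𝕜 X E : Type*} [RCLike 𝕜] [NormedAddCommGroup E] [InnerProductSpace 𝕜 E]
  [MeasurableSpace X] {μ : Measure X}

theorem inner_coeFn_toLp_ae_eq {f g : X → E} (hf : MemLp f 2 μ) (hg : MemLp g 2 μ) :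
    (fun x => inner 𝕜 (hf.toLp f x) (hg.toLp g x)) =ᵐ[μ] fun x => inner 𝕜 (f x) (g x) := by
  filter_upwards [hf.coeFn_toLp, hg.coeFn_toLp] with x hfx hgx
  rw [hfx, hgx]

theorem integrable_inner_of_memLp_two {f g : X → E} (hf : MemLp f 2 μ) (hg : MemLp g 2 μ) :
    Integrable (fun x => inner 𝕜 (f x) (g x)) μ :=
  (L2.integrable_inner (hf.toLp f) (hg.toLp g)).congr (inner_coeFn_toLp_ae_eq hf hg)

theorem posSemidef_integral_inner {ι : Type*} [Finite ι] {f : ι → X → E}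
    (hf : ∀ i, MemLp (f i) 2 μ) :
    (Matrix.of fun i j => ∫ x, inner 𝕜 (f j x) (f i x) ∂μ).PosSemidef := by
  have eq_transpose_gram : (Matrix.of fun i j => ∫ x, inner 𝕜 (f j x) (f i x) ∂μ) =
      (gram 𝕜 fun i => (hf i).toLp (f i))ᵀ := by
    ext i j
    exact (integral_congr_ae (inner_coeFn_toLp_ae_eq (hf j) (hf i))).symm
  rw [eq_transpose_gram]
  exact (posSemidef_gram 𝕜 _).transpose

end L2

section BergmanDensity

variable {𝕜 ι X E : Type*} [RCLike 𝕜] [Fintype ι] [NormedAddCommGroup E]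

/-- The Bergman density `N⁻¹ ∑ᵢ ‖sᵢ‖²` of a family of `N` functions. It is identically zero on the
empty family. -/
noncomputable def bergmanDensity (s : ι → X → E) (x : X) : ℝ :=
  (Fintype.card ι : ℝ)⁻¹ * ∑ i, ‖s i x‖ ^ 2

theorem bergmanDensity_nonneg (s : ι → X → E) (x : X) : 0 ≤ bergmanDensity s x := by
  unfold bergmanDensity
  positivity

theorem sum_norm_sq_eq_card_mul_bergmanDensity (s : ι → X → E) (x : X) :
    ∑ i, ‖s i x‖ ^ 2 = Fintype.card ι * bergmanDensity s x := by
  cases isEmpty_or_nonempty ι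
  · simp
  · exact (mul_inv_cancel_left₀ (by simp) _).symm

theorem norm_sq_le_card_mul_bergmanDensity (s : ι → X → E) (i : ι) (x : X) :
    ‖s i x‖ ^ 2 ≤ Fintype.card ι * bergmanDensity s x := by
  rw [← sum_norm_sq_eq_card_mul_bergmanDensity]
  exact Finset.single_le_sum (f := fun j => ‖s j x‖ ^ 2) (fun _ _ => by positivity)
    (Finset.mem_univ i)

variable [InnerProductSpace 𝕜 E]

variable (𝕜) in
/-- The functions `sᵢ / √ρ`, where `ρ` is the Bergman density of the family `s`; their Bergman
density is `1` wherever `ρ` does not vanish. At the zeros of `ρ` their value is `0`. -/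
noncomputable def bergmanNormalize (s : ι → X → E) (i : ι) (x : X) : E :=
  ((√(bergmanDensity s x))⁻¹ : 𝕜) • s i x

theorem inner_bergmanNormalize (s : ι → X → E) (i j : ι) (x : X) :
    inner 𝕜 (bergmanNormalize 𝕜 s i x) (bergmanNormalize 𝕜 s j x) =
      inner 𝕜 (s i x) (s j x) / (bergmanDensity s x : 𝕜) := by
  have sqrt_mul_sqrt : (√(bergmanDensity s x) : 𝕜) * √(bergmanDensity s x) = bergmanDensity s x :=
    mod_cast Real.mul_self_sqrt (bergmanDensity_nonneg s x)
  rw [bergmanNormalize, bergmanNormalize, inner_smul_left, inner_smul_right, map_inv₀,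
    RCLike.conj_ofReal, ← mul_assoc, ← mul_inv, sqrt_mul_sqrt, inv_mul_eq_div]

theorem norm_bergmanNormalize_le (s : ι → X → E) (i : ι) (x : X) :
    ‖bergmanNormalize 𝕜 s i x‖ ≤ √(Fintype.card ι) := by
  rw [bergmanNormalize, norm_smul, norm_inv, RCLike.norm_ofReal, abs_of_nonneg (Real.sqrt_nonneg _),
    inv_mul_eq_div]
  refine div_le_of_le_mul₀ (Real.sqrt_nonneg _) (Real.sqrt_nonneg _) ?_
  rw [← Real.sqrt_mul (Nat.cast_nonneg _)]
  exact Real.le_sqrt_of_sq_le (norm_sq_le_card_mul_bergmanDensity s i x)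

theorem sum_inner_self_div_bergmanDensity {s : ι → X → E} {x : X} (hx : 0 < bergmanDensity s x) :
    ∑ i, inner 𝕜 (s i x) (s i x) / (bergmanDensity s x : 𝕜) = Fintype.card ι := by
  have density_ne_zero : (bergmanDensity s x : 𝕜) ≠ 0 := mod_cast hx.ne'
  rw [← Finset.sum_div, div_eq_iff density_ne_zero]
  simp only [inner_self_eq_norm_sq_to_K]
  exact_mod_cast sum_norm_sq_eq_card_mul_bergmanDensity s x

variable [MeasurableSpace X] {μ : Measure X}

variable (𝕜 μ) in
/-- The Gram matrix of the family `s` with weight the inverse of its Bergman density `ρ`: the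
`(i, j)` entry is the integral of `⟨sᵢ, sⱼ⟩ / ρ`, linear in `sᵢ`. Mathlib's `inner` is linear in its
second argument, which is why the indices appear swapped. -/
noncomputable def bergmanGram (s : ι → X → E) : Matrix ι ι 𝕜 :=
  Matrix.of fun i j => ∫ x, inner 𝕜 (s j x) (s i x) / (bergmanDensity s x : 𝕜) ∂μ

variable [IsFiniteMeasure μ] {s : ι → X → E}

theorem memLp_bergmanNormalize (hs : ∀ i, AEStronglyMeasurable (s i) μ) (p : ENNReal) (i : ι) :
    MemLp (bergmanNormalize 𝕜 s i) p μ := by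
  have density_meas : AEMeasurable (bergmanDensity s) μ :=
    (Finset.aemeasurable_fun_sum _ fun j _ => (hs j).norm.aemeasurable.pow_const 2).const_mul _
  have factor_meas : AEMeasurable (fun x => ((√(bergmanDensity s x))⁻¹ : 𝕜)) μ :=
    (RCLike.measurable_ofReal.comp_aemeasurable density_meas.sqrt).inv
  exact MemLp.of_bound (factor_meas.aestronglyMeasurable.smul (hs i)) _
    (.of_forall (norm_bergmanNormalize_le s i))

theorem integrable_inner_div_bergmanDensity (hs : ∀ i, AEStronglyMeasurable (s i) μ) (i j : ι) :
    Integrable (fun x => inner 𝕜 (s i x) (s j x) / (bergmanDensity s x : 𝕜)) μ := by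
  simp only [← inner_bergmanNormalize]
  exact integrable_inner_of_memLp_two (memLp_bergmanNormalize hs 2 i)
    (memLp_bergmanNormalize hs 2 j)

theorem posSemidef_bergmanGram (hs : ∀ i, AEStronglyMeasurable (s i) μ) :
    (bergmanGram 𝕜 μ s).PosSemidef := by
  simp only [bergmanGram, ← inner_bergmanNormalize]
  exact posSemidef_integral_inner (memLp_bergmanNormalize hs 2)

theorem trace_bergmanGram (hs : ∀ i, AEStronglyMeasurable (s i) μ)
    (hpos : ∀ᵐ x ∂μ, 0 < bergmanDensity s x) :
    (bergmanGram 𝕜 μ s).trace = Fintype.card ι * (μ.real Set.univ : 𝕜) :=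
  calc (bergmanGram 𝕜 μ s).trace
      = ∫ x, ∑ i, inner 𝕜 (s i x) (s i x) / (bergmanDensity s x : 𝕜) ∂μ :=
        (integral_finsetSum _ fun i _ => integrable_inner_div_bergmanDensity hs i i).symm
    _ = ∫ _, (Fintype.card ι : 𝕜) ∂μ :=
        integral_congr_ae (hpos.mono fun _ => sum_inner_self_div_bergmanDensity)
    _ = Fintype.card ι * (μ.real Set.univ : 𝕜) := by
        rw [integral_const, RCLike.real_smul_eq_coe_mul, mul_comm]

theorem det_bergmanGram_le [DecidableEq ι] (hs : ∀ i, AEStronglyMeasurable (s i) μ)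
    (hpos : ∀ᵐ x ∂μ, 0 < bergmanDensity s x) :
    (bergmanGram 𝕜 μ s).det ≤ (μ.real Set.univ : 𝕜) ^ Fintype.card ι := by
  cases isEmpty_or_nonempty ι
  · simp
  · calc (bergmanGram 𝕜 μ s).det
        ≤ ((bergmanGram 𝕜 μ s).trace / Fintype.card ι) ^ Fintype.card ι :=
          det_le_trace_div_card_pow_of_posSemidef (posSemidef_bergmanGram hs)
      _ = (μ.real Set.univ : 𝕜) ^ Fintype.card ι := by
          rw [trace_bergmanGram hs hpos, mul_div_cancel_left₀ _ (by simp)]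

end BergmanDensity

theorem gram_matrix_weighted_by_bergman_density_general
    {𝕜 ι X E : Type*} [RCLike 𝕜] [Fintype ι] [DecidableEq ι]
    [NormedAddCommGroup E] [InnerProductSpace 𝕜 E]
    [MeasurableSpace X] {μ : Measure X} [IsFiniteMeasure μ] {s : ι → X → E}
    (hs : ∀ i, AEStronglyMeasurable (s i) μ) (hpos : ∀ᵐ x ∂μ, 0 < bergmanDensity s x) :
    (∀ i j, Integrable (fun x => inner 𝕜 (s j x) (s i x) / (bergmanDensity s x : 𝕜)) μ) ∧
    (bergmanGram 𝕜 μ s).PosSemidef ∧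
    (bergmanGram 𝕜 μ s).trace = Fintype.card ι * (μ.real Set.univ : 𝕜) ∧
    ∃ d : ℝ, (bergmanGram 𝕜 μ s).det = (d : 𝕜) ∧ d ≤ μ.real Set.univ ^ Fintype.card ι := by
  have posSemidef : (bergmanGram 𝕜 μ s).PosSemidef := posSemidef_bergmanGram hs
  obtain ⟨d, -, hd⟩ := RCLike.nonneg_iff_exists_ofReal.mp posSemidef.det_nonneg
  have det_le := det_bergmanGram_le (𝕜 := 𝕜) hs hpos
  rw [← hd] at det_le
  exact ⟨fun i j => integrable_inner_div_bergmanDensity hs j i, posSemidef,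
    trace_bergmanGram hs hpos, d, hd.symm, mod_cast det_le⟩

/-- The Gram matrix of functions `s i` weighted by the inverse Bergman density
`ρ = N⁻¹ ∑ |sᵢ|²` is positive semidefinite Hermitian, has trace `N·μ(X)` and
determinant at most `μ(X)^N`. -/
theorem gram_matrix_weighted_by_bergman_density
    {X : Type*} [MeasurableSpace X] (μ : Measure X) [IsFiniteMeasure μ]
    (N : ℕ) (hN : 0 < N) (s : Fin N → X → ℂ) (hs : ∀ i, Measurable (s i))
    (ρ : X → ℝ) (hρ : ρ = fun x => (N : ℝ)⁻¹ * ∑ i, ‖s i x‖ ^ 2)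
    (hpos : ∀ᵐ x ∂μ, 0 < ρ x)
    (G : Matrix (Fin N) (Fin N) ℂ)
    (hG : G = Matrix.of fun i j =>
      ∫ x, s i x * (starRingEnd ℂ) (s j x) / (ρ x : ℂ) ∂μ) :
    (∀ i j, Integrable (fun x => s i x * (starRingEnd ℂ) (s j x) / (ρ x : ℂ)) μ) ∧
    G.PosSemidef ∧
    G.trace = (N : ℂ) * ((μ Set.univ).toReal : ℂ) ∧
    ∃ d : ℝ, G.det = (d : ℂ) ∧ d ≤ (μ Set.univ).toReal ^ N := by
  subst hρ hG
  simpa [bergmanGram, bergmanDensity, Measure.real] using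
    gram_matrix_weighted_by_bergman_density_general (𝕜 := ℂ)
      (fun i => (hs i).aestronglyMeasurable) (by simpa [bergmanDensity] using hpos)
end

section
/- Let μ₀ be a measure on a measurable space X, let γ > 0 and k > 0 be real numbers, N a positive integer, f₁, …, f_N : X → ℂ measurable, and u, v : X → ℝ measurable. Assume that the measure ν := exp(−(γu + (1−γ)v))·μ₀ is a probability measure, that each function f_i·conj(f_j)·exp(−ku) is ν-integrable, and that the N×N Gram matrix G with entries G_{ij} = ∫_X f_i·conj(f_j)·exp(−ku) dν has det G > 0. Then ∫_{X^N} |det[(f_i(x_j))_{i,j}]|^{−2γ/k} · exp(−(1−γ)(v(x₁)+⋯+v(x_N))) dμ₀^{⊗N} ≥ (N! · det G)^{−γ/k}. -/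
open MeasureTheory ENNReal Matrix

/-!
Replacing `f i` by `exp (-k u / 2) * f i` turns `G` into a Gram matrix in `L²(ν)`, and Andréief's
identity evaluates the mean of `|det (f i (x j))|² * exp (-k ∑ u (x j))` under the product
probability measure `ν^N` as `N! * det G`. Jensen's inequality for `t ↦ t ^ (-γ / k)` then bounds
`(N! * det G) ^ (-γ / k)` by the mean of `|det (f i (x j))| ^ (-2γ / k) * exp (γ ∑ u (x j))`, where
the factor `exp (γ ∑ u (x j))` cancels the `u`-part of the density of `ν^N` with respect to `μ₀^N`.
-/

open scoped ComplexConjugate Nat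

section Measure

/- Jensen's inequality for `t ↦ t ^ (-p)`, obtained from Hölder's inequality applied to
`1 = g ^ (p / (1 + p)) * (g ^ (-p)) ^ (1 / (1 + p))` so that the values `0` and `∞` are covered. -/
lemma rpow_neg_lintegral_le_lintegral_rpow_neg {Ω : Type*} [MeasurableSpace Ω] {P : Measure Ω}
    [IsProbabilityMeasure P] {g : Ω → ℝ≥0∞} (hg : AEMeasurable g P) {p : ℝ} (hp : 0 ≤ p) :
    (∫⁻ x, g x ∂P) ^ (-p) ≤ ∫⁻ x, g x ^ (-p) ∂P := by
  rcases hp.eq_or_lt with rfl | hp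
  · simp
  by_cases int_top : ∫⁻ x, g x ∂P = ∞
  · simp [int_top, ENNReal.top_rpow_of_neg (neg_lt_zero.2 hp)]
  by_cases int_neg_top : ∫⁻ x, g x ^ (-p) ∂P = ∞
  · simp [int_neg_top]
  have hp₁ : 0 < 1 + p := by positivity
  have integrand_eq_one :
      ∀ᵐ x ∂P, g x ^ (p / (1 + p)) * (g x ^ (-p)) ^ (1 / (1 + p)) = 1 := by
    filter_upwards [ae_lt_top' hg int_top, ae_lt_top' (hg.pow_const _) int_neg_top]
      with x hx_top hx_neg_top
    have hx_zero : g x ≠ 0 := by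
      intro hx
      simp [hx, ENNReal.zero_rpow_of_neg (neg_lt_zero.2 hp)] at hx_neg_top
    rw [← ENNReal.rpow_mul, ← ENNReal.rpow_add _ _ hx_zero hx_top.ne,
      show p / (1 + p) + -p * (1 / (1 + p)) = 0 by ring, ENNReal.rpow_zero]
  have holder : 1 ≤ (∫⁻ x, g x ∂P) ^ (p / (1 + p)) * (∫⁻ x, g x ^ (-p) ∂P) ^ (1 / (1 + p)) := by
    simpa only [lintegral_congr_ae integrand_eq_one, lintegral_one, measure_univ] using
      ENNReal.lintegral_mul_norm_pow_le hg (hg.pow_const (-p)) (p := p / (1 + p))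
        (q := 1 / (1 + p)) (by positivity) (by positivity) (by field_simp; ring)
  have one_le_mul : 1 ≤ (∫⁻ x, g x ∂P) ^ p * ∫⁻ x, g x ^ (-p) ∂P := by
    simpa [ENNReal.mul_rpow_of_nonneg _ _ hp₁.le, ← ENNReal.rpow_mul, hp₁.ne'] using
      ENNReal.rpow_le_rpow holder hp₁.le
  rw [ENNReal.rpow_neg, ENNReal.inv_le_iff_le_mul (fun h ↦ absurd h int_neg_top)
    fun h ↦ absurd h (ENNReal.rpow_ne_top_of_nonneg hp.le int_top)]
  exact one_le_mul

lemma lintegral_fin_prod_eq_prod {n : ℕ} {E : Fin n → Type*} [∀ i, MeasurableSpace (E i)]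
    {μ : ∀ i, Measure (E i)} [∀ i, SigmaFinite (μ i)] {f : ∀ i, E i → ℝ≥0∞}
    (hf : ∀ i, Measurable (f i)) :
    ∫⁻ x, ∏ i, f i (x i) ∂Measure.pi μ = ∏ i, ∫⁻ x, f i x ∂μ i := by
  induction n with
  | zero => simp
  | succ n ih =>
    have measurable_tail : Measurable fun y : ∀ i : Fin n, E i.succ ↦ ∏ i, f i.succ (y i) :=
      Finset.measurable_fun_prod _ fun i _ ↦ (hf i.succ).comp (measurable_pi_apply i)
    calc ∫⁻ x, ∏ i, f i (x i) ∂Measure.pi μ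
        = ∫⁻ z : E 0 × (∀ i : Fin n, E i.succ), f 0 z.1 * ∏ i, f i.succ (z.2 i)
            ∂(μ 0).prod (Measure.pi fun i ↦ μ i.succ) := by
          simp only [Fin.prod_univ_succ]
          exact ((measurePreserving_piFinSuccAbove μ 0).lintegral_map_equiv
            (fun z ↦ f 0 z.1 * ∏ i, f (Fin.succAbove 0 i) (z.2 i)) _).symm
      _ = (∫⁻ x, f 0 x ∂μ 0) * ∏ i : Fin n, ∫⁻ x, f i.succ x ∂μ i.succ := by
          rw [← ih fun i ↦ hf i.succ]
          exact lintegral_prod_mul (hf 0).aemeasurable measurable_tail.aemeasurable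
      _ = ∏ i, ∫⁻ x, f i x ∂μ i := by rw [Fin.prod_univ_succ]

variable {ι : Type*} [Fintype ι] {E : ι → Type*} [∀ i, MeasurableSpace (E i)]
  {μ : ∀ i, Measure (E i)}

lemma lintegral_fintype_prod_eq_prod [∀ i, SigmaFinite (μ i)] {f : ∀ i, E i → ℝ≥0∞}
    (hf : ∀ i, Measurable (f i)) :
    ∫⁻ x, ∏ i, f i (x i) ∂Measure.pi μ = ∏ i, ∫⁻ x, f i x ∂μ i := by
  let e := (Fintype.equivFin ι).symm
  rw [(measurePreserving_piCongrLeft μ e).lintegral_map_equiv]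
  simp_rw [← e.prod_comp, MeasurableEquiv.coe_piCongrLeft, Equiv.piCongrLeft_apply_apply]
  exact lintegral_fin_prod_eq_prod fun i ↦ hf (e i)

lemma pi_withDensity [∀ i, SigmaFinite (μ i)] {w : ∀ i, E i → ℝ≥0∞} (hw : ∀ i, Measurable (w i))
    [∀ i, SigmaFinite ((μ i).withDensity (w i))] :
    Measure.pi (fun i ↦ (μ i).withDensity (w i)) =
      (Measure.pi μ).withDensity fun x ↦ ∏ i, w i (x i) := by
  refine Measure.pi_eq fun s hs ↦ ?_
  rw [withDensity_apply _ (.univ_pi hs), Measure.restrict_pi_pi, lintegral_fintype_prod_eq_prod hw]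
  exact Finset.prod_congr rfl fun i _ ↦ (withDensity_apply _ (hs i)).symm

lemma sigmaFinite_of_withDensity {X : Type*} [MeasurableSpace X] {μ : Measure X} {w : X → ℝ≥0∞}
    [SigmaFinite (μ.withDensity w)] (hw : AEMeasurable w μ) (hw_zero : ∀ᵐ x ∂μ, w x ≠ 0)
    (hw_top : ∀ᵐ x ∂μ, w x ≠ ∞) : SigmaFinite μ := by
  rw [← withDensity_inv_same₀ hw hw_zero hw_top]
  refine SigmaFinite.withDensity_of_ne_top ?_
  filter_upwards [(withDensity_absolutelyContinuous μ w).ae_le hw_zero] with x hx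
  exact ENNReal.inv_ne_top.2 hx

end Measure

/-- The (unnormalized) Slater determinant `det (f i (x j))` of a family of functions `f`, as a
function of the point configuration `x`. -/
def slaterDet {ι X R : Type*} [Fintype ι] [DecidableEq ι] [CommRing R] (f : ι → X → R)
    (x : ι → X) : R :=
  (Matrix.of fun i j ↦ f i (x j)).det

/-- The matrix of the bilinear pairings `∫ f i * g j ∂μ` of two families of functions. With
`g = conj f` this is the Gram matrix of `f` in `L²(μ)`. -/
noncomputable def pairingMatrix {ι X 𝕜 : Type*} [MeasurableSpace X] [RCLike 𝕜] (μ : Measure X)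
    (f g : ι → X → 𝕜) : Matrix ι ι 𝕜 :=
  Matrix.of fun i j ↦ ∫ x, f i x * g j x ∂μ

section SlaterDet

variable {ι X R : Type*} [Fintype ι] [DecidableEq ι] [CommRing R]

lemma slaterDet_mul_left (w : X → R) (f : ι → X → R) (x : ι → X) :
    slaterDet (fun i y ↦ w y * f i y) x = (∏ j, w (x j)) * slaterDet f x :=
  det_mul_row (fun j ↦ w (x j)) (Matrix.of fun i j ↦ f i (x j))

lemma slaterDet_conj [StarRing R] (f : ι → X → R) (x : ι → X) :
    slaterDet (fun i y ↦ conj (f i y)) x = conj (slaterDet f x) :=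
  ((starRingEnd R).map_det _).symm

lemma slaterDet_mul_slaterDet (f g : ι → X → R) (x : ι → X) :
    slaterDet f x * slaterDet g x = ∑ τ : Equiv.Perm ι, ∑ σ : Equiv.Perm ι,
      ((τ.sign : ℤ) * (σ.sign : ℤ) : R) * ∏ j, f (σ j) (x j) * g (τ j) (x j) := by
  simp only [slaterDet, det_apply', of_apply, Finset.sum_mul_sum, Finset.prod_mul_distrib]
  rw [Finset.sum_comm]
  exact Finset.sum_congr rfl fun τ _ ↦ Finset.sum_congr rfl fun σ _ ↦ by ring

lemma sum_sign_mul_prod_comp_perm (G : Matrix ι ι R) (τ : Equiv.Perm ι) :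
    ∑ σ : Equiv.Perm ι, ((τ.sign : ℤ) * (σ.sign : ℤ) : R) * ∏ j, G (σ j) (τ j) = G.det := by
  have sign_mul_self : ((τ.sign : ℤ) * (τ.sign : ℤ) : R) = 1 := by
    rw [← Int.cast_mul, ← Units.val_mul, Int.units_mul_self, Units.val_one, Int.cast_one]
  calc ∑ σ : Equiv.Perm ι, ((τ.sign : ℤ) * (σ.sign : ℤ) : R) * ∏ j, G (σ j) (τ j)
      = (τ.sign : ℤ) * (G.submatrix id τ).det := by
        simp only [det_apply', submatrix_apply, id, Finset.mul_sum, mul_assoc]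
    _ = G.det := by rw [det_permute', ← mul_assoc, sign_mul_self, one_mul]

end SlaterDet

section Andreief

variable {ι X 𝕜 : Type*} [Fintype ι] [MeasurableSpace X] [RCLike 𝕜] {μ : Measure X}
  [SigmaFinite μ] {f g : ι → X → 𝕜}

lemma integrable_prod_mul_comp_perm (hfg : ∀ i j, Integrable (fun x ↦ f i x * g j x) μ)
    (σ τ : Equiv.Perm ι) :
    Integrable (fun x : ι → X ↦ ∏ j, f (σ j) (x j) * g (τ j) (x j)) (Measure.pi fun _ ↦ μ) :=
  Integrable.fintype_prod (f := fun j y ↦ f (σ j) y * g (τ j) y) fun _ ↦ hfg _ _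

variable [DecidableEq ι]

lemma integrable_slaterDet_mul_slaterDet
    (hfg : ∀ i j, Integrable (fun x ↦ f i x * g j x) μ) :
    Integrable (fun x ↦ slaterDet f x * slaterDet g x) (Measure.pi fun _ ↦ μ) := by
  simp only [slaterDet_mul_slaterDet]
  exact integrable_finsetSum _ fun τ _ ↦ integrable_finsetSum _ fun σ _ ↦
    (integrable_prod_mul_comp_perm hfg σ τ).const_mul _

lemma integral_slaterDet_mul_slaterDet
    (hfg : ∀ i j, Integrable (fun x ↦ f i x * g j x) μ) :
    ∫ x, slaterDet f x * slaterDet g x ∂Measure.pi (fun _ ↦ μ) =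
      (Fintype.card ι)! * (pairingMatrix μ f g).det := by
  have integrable_term (τ σ : Equiv.Perm ι) :=
    (integrable_prod_mul_comp_perm hfg σ τ).const_mul ((τ.sign : ℤ) * (σ.sign : ℤ) : 𝕜)
  have integral_prod (τ σ : Equiv.Perm ι) :
      ∫ x : ι → X, ∏ j, f (σ j) (x j) * g (τ j) (x j) ∂Measure.pi (fun _ ↦ μ) =
        ∏ j, pairingMatrix μ f g (σ j) (τ j) :=
    integral_fintype_prod_eq_prod fun j y ↦ f (σ j) y * g (τ j) y
  simp only [slaterDet_mul_slaterDet]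
  rw [integral_finsetSum _ fun τ _ ↦ integrable_finsetSum _ fun σ _ ↦ integrable_term τ σ]
  simp only [integral_finsetSum _ fun σ _ ↦ integrable_term _ σ, integral_const_mul,
    integral_prod, sum_sign_mul_prod_comp_perm, Finset.sum_const, Finset.card_univ,
    Fintype.card_perm, nsmul_eq_mul]

lemma lintegral_enorm_slaterDet_sq
    (hf : ∀ i j, Integrable (fun x ↦ f i x * conj (f j x)) μ) :
    ∫⁻ x, ‖slaterDet f x‖ₑ ^ 2 ∂Measure.pi (fun _ ↦ μ) =
      ENNReal.ofReal ((Fintype.card ι)! *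
        RCLike.re (pairingMatrix μ f fun i x ↦ conj (f i x)).det) := by
  have norm_sq_eq (x : ι → X) :
      RCLike.re (slaterDet f x * slaterDet (fun i y ↦ conj (f i y)) x) = ‖slaterDet f x‖ ^ 2 := by
    rw [slaterDet_conj, RCLike.mul_conj, ← RCLike.ofReal_pow, RCLike.ofReal_re]
  have integrable_det := integrable_slaterDet_mul_slaterDet hf
  have integrable_norm_sq :
      Integrable (fun x ↦ ‖slaterDet f x‖ ^ 2) (Measure.pi fun _ ↦ μ) := by
    simpa only [norm_sq_eq] using integrable_det.re
  calc ∫⁻ x, ‖slaterDet f x‖ₑ ^ 2 ∂Measure.pi (fun _ ↦ μ)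
      = ENNReal.ofReal (∫ x, ‖slaterDet f x‖ ^ 2 ∂Measure.pi (fun _ ↦ μ)) := by
        rw [ofReal_integral_eq_lintegral_ofReal integrable_norm_sq (.of_forall fun x ↦ sq_nonneg _)]
        simp only [ENNReal.ofReal_pow (norm_nonneg _), ofReal_norm]
    _ = _ := by
        simp only [← norm_sq_eq]
        rw [integral_re integrable_det, integral_slaterDet_mul_slaterDet hf,
          ← RCLike.ofReal_natCast, RCLike.re_ofReal_mul]

lemma aemeasurable_enorm_slaterDet_sq
    (hf : ∀ i j, Integrable (fun x ↦ f i x * conj (f j x)) μ) :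
    AEMeasurable (fun x ↦ ‖slaterDet f x‖ₑ ^ 2) (Measure.pi fun _ ↦ μ) := by
  simpa [slaterDet_conj, sq] using (integrable_slaterDet_mul_slaterDet hf).1.enorm

end Andreief

section PartitionFunction

variable {ι X 𝕜 : Type*} [Fintype ι] [DecidableEq ι] [RCLike 𝕜]

lemma exp_half_mul_mul_conj (t : ℝ) (a b : 𝕜) :
    (Real.exp (-(t / 2)) : 𝕜) * a * conj ((Real.exp (-(t / 2)) : 𝕜) * b) =
      a * conj b * (Real.exp (-t) : 𝕜) := by
  have exp_eq : Real.exp (-t) = Real.exp (-(t / 2)) * Real.exp (-(t / 2)) := by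
    rw [← Real.exp_add]
    ring_nf
  rw [exp_eq, map_mul, RCLike.conj_ofReal, RCLike.ofReal_mul]
  ring

lemma prod_exp_mul_enorm_slaterDet_rpow {γ k : ℝ} (hk : k ≠ 0) (f : ι → X → 𝕜) (u v : X → ℝ)
    (x : ι → X) :
    (∏ j, ENNReal.ofReal (Real.exp (-(γ * u (x j) + (1 - γ) * v (x j))))) *
        ‖slaterDet (fun i y ↦ (Real.exp (-(k * u y / 2)) : 𝕜) * f i y) x‖ₑ ^ (-(2 * (γ / k))) =
      ‖slaterDet f x‖ₑ ^ (-(2 * γ / k)) *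
        ENNReal.ofReal (Real.exp (-(1 - γ) * ∑ j, v (x j))) := by
  have enorm_weight : ‖∏ j, (Real.exp (-(k * u (x j) / 2)) : 𝕜)‖ₑ =
      ENNReal.ofReal (Real.exp (-(k / 2) * ∑ j, u (x j))) := by
    rw [← RCLike.ofReal_prod, ← Real.exp_sum, ← ofReal_norm, RCLike.norm_ofReal, Real.abs_exp,
      Finset.mul_sum]
    ring_nf
  have exponent_eq : ∑ j, -(γ * u (x j) + (1 - γ) * v (x j)) +
      -(k / 2) * (∑ j, u (x j)) * -(2 * (γ / k)) = -(1 - γ) * ∑ j, v (x j) := by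
    simp only [Finset.sum_neg_distrib, Finset.sum_add_distrib, ← Finset.mul_sum]
    field_simp
    ring
  rw [slaterDet_mul_left, enorm_mul, enorm_weight,
    ENNReal.mul_rpow_of_ne_top ENNReal.ofReal_ne_top enorm_ne_top,
    ENNReal.ofReal_rpow_of_pos (Real.exp_pos _), ← Real.exp_mul,
    ← ENNReal.ofReal_prod_of_nonneg fun _ _ ↦ Real.exp_nonneg _, ← Real.exp_sum, ← mul_assoc,
    ← ENNReal.ofReal_mul (Real.exp_nonneg _), ← Real.exp_add, exponent_eq, mul_comm, mul_div_assoc]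

variable [MeasurableSpace X]

lemma rpow_neg_factorial_mul_det_le_lintegral_enorm_slaterDet {ν : Measure X}
    [IsProbabilityMeasure ν] {f : ι → X → 𝕜}
    (hf : ∀ i j, Integrable (fun x ↦ f i x * conj (f j x)) ν) {p : ℝ} (hp : 0 ≤ p) :
    ENNReal.ofReal ((Fintype.card ι)! *
        RCLike.re (pairingMatrix ν f fun i x ↦ conj (f i x)).det) ^ (-p) ≤
      ∫⁻ x, ‖slaterDet f x‖ₑ ^ (-(2 * p)) ∂Measure.pi (fun _ ↦ ν) := by
  rw [← lintegral_enorm_slaterDet_sq hf]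
  refine (rpow_neg_lintegral_le_lintegral_rpow_neg
    (aemeasurable_enorm_slaterDet_sq hf) hp).trans_eq ?_
  simp only [← ENNReal.rpow_natCast, ← ENNReal.rpow_mul, Nat.cast_ofNat, mul_neg]

theorem partition_function_ge_gram_det_rpow_general (μ₀ : Measure X) {γ k : ℝ} (hγ : 0 ≤ γ)
    (hk : 0 < k) (f : ι → X → 𝕜) {u v : X → ℝ} (hu : Measurable u) (hv : Measurable v)
    (ν : Measure X)
    (hν : ν = μ₀.withDensity fun x ↦
      ENNReal.ofReal (Real.exp (-(γ * u x + (1 - γ) * v x))))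
    [IsProbabilityMeasure ν]
    (hint : ∀ i j, Integrable
      (fun x ↦ f i x * conj (f j x) * (Real.exp (-(k * u x)) : 𝕜)) ν) :
    ENNReal.ofReal ((Fintype.card ι)! * RCLike.re (Matrix.of fun i j ↦
        ∫ x, f i x * conj (f j x) * (Real.exp (-(k * u x)) : 𝕜) ∂ν).det) ^ (-(γ / k)) ≤
      ∫⁻ x : ι → X, ‖(Matrix.of fun i j ↦ f i (x j)).det‖ₑ ^ (-(2 * γ / k)) *
        ENNReal.ofReal (Real.exp (-(1 - γ) * ∑ j, v (x j))) ∂Measure.pi fun _ ↦ μ₀ := by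
  set ρ : X → ℝ≥0∞ := fun x ↦ ENNReal.ofReal (Real.exp (-(γ * u x + (1 - γ) * v x)))
  have hρ : Measurable ρ := by fun_prop
  have sigmaFinite_density : SigmaFinite (μ₀.withDensity ρ) := hν ▸ inferInstance
  have : SigmaFinite μ₀ := sigmaFinite_of_withDensity hρ.aemeasurable
    (.of_forall fun x ↦ (ENNReal.ofReal_pos.2 (Real.exp_pos _)).ne')
    (.of_forall fun x ↦ ENNReal.ofReal_ne_top)
  have jensen := rpow_neg_factorial_mul_det_le_lintegral_enorm_slaterDet (ν := ν)
    (f := fun i x ↦ (Real.exp (-(k * u x / 2)) : 𝕜) * f i x) (p := γ / k)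
    (by simpa only [exp_half_mul_mul_conj] using hint) (by positivity)
  simp only [pairingMatrix, exp_half_mul_mul_conj] at jensen
  refine jensen.trans_eq ?_
  rw [hν, pi_withDensity fun _ ↦ hρ, lintegral_withDensity_eq_lintegral_mul_non_measurable _
    (by fun_prop) (.of_forall fun x ↦ ENNReal.prod_lt_top fun _ _ ↦ ENNReal.ofReal_lt_top)]
  exact lintegral_congr fun x ↦ prod_exp_mul_enorm_slaterDet_rpow hk.ne' f u v x

end PartitionFunction

/-- Key inequality (trivialized form of Proposition 2.2): the partition-function type
integral over `X^N` is bounded below by `(N! · det G)^(-γ/k)`, where `G` is the Gram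
matrix of the `fᵢ` weighted by `e^{-ku}` with respect to the probability measure
`ν = e^{-(γu+(1-γ)v)} μ₀`. -/
theorem partition_function_ge_gram_det_rpow
    {X : Type*} [MeasurableSpace X] (μ₀ : Measure X)
    (γ k : ℝ) (hγ : 0 < γ) (hk : 0 < k)
    (N : ℕ) (hN : 0 < N)
    (f : Fin N → X → ℂ) (hf : ∀ i, Measurable (f i))
    (u v : X → ℝ) (hu : Measurable u) (hv : Measurable v)
    (ν : Measure X)
    (hν : ν = μ₀.withDensity fun x =>
      ENNReal.ofReal (Real.exp (-(γ * u x + (1 - γ) * v x))))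
    (hprob : IsProbabilityMeasure ν)
    (hint : ∀ i j, Integrable
      (fun x => f i x * (starRingEnd ℂ) (f j x) * (Real.exp (-(k * u x)) : ℂ)) ν)
    (G : Matrix (Fin N) (Fin N) ℂ)
    (hG : G = Matrix.of fun i j =>
      ∫ x, f i x * (starRingEnd ℂ) (f j x) * (Real.exp (-(k * u x)) : ℂ) ∂ν)
    (hdet_re : 0 < G.det.re) (hdet_im : G.det.im = 0) :
    (ENNReal.ofReal ((Nat.factorial N : ℝ) * G.det.re)) ^ (-(γ / k)) ≤
      ∫⁻ x : Fin N → X,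
        (‖(Matrix.of fun i j => f i (x j)).det‖₊ : ℝ≥0∞) ^ (-(2 * γ / k)) *
          ENNReal.ofReal (Real.exp (-(1 - γ) * ∑ j, v (x j)))
        ∂(Measure.pi fun _ : Fin N => μ₀) := by
  subst hG
  simpa only [Fintype.card_fin] using!
    partition_function_ge_gram_det_rpow_general μ₀ hγ.le hk f hu hv ν hν hint
end

section
/- Let μ₀ be a measure on a measurable space X, let γ > 0 and k > 0 be real numbers, N a positive integer, f₁, …, f_N : X → ℂ measurable, and v : X → ℝ measurable. Let C be an invertible N×N complex matrix and set g_i := ∑_{l=1}^N C_{il} f_l. Assume ρ_g := N^{−1}∑_{i=1}^N |g_i|² is strictly positive μ₀-almost everywhere, set u_g := k^{−1} log ρ_g, and assume c := ∫_X exp(−(γ u_g + (1−γ)v)) dμ₀ < ∞. Then each function f_i·conj(f_j)·exp(−(k+γ)u_g − (1−γ)v) is μ₀-integrable and the N×N matrix G' with entries G'_{ij} = ∫_X f_i·conj(f_j)·exp(−(k+γ)u_g − (1−γ)v) dμ₀ satisfies det G' ≤ |det C|^{−2} · c^N. -/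
open MeasureTheory ENNReal Matrix

/-!
Both Gram matrices live in `L²(ν)` for `ν = e^{-(k+γ)u_g - (1-γ)v} μ₀`. Since the `gᵢ` arise from
the `fᵢ` by `C`, the Gram determinant of the `gᵢ` is `|det C|²` times that of the `fᵢ`. A Gram
matrix is positive semidefinite, so the inequality of arithmetic and geometric means for its
eigenvalues bounds its determinant by the `N`-th power of `N⁻¹ ∑ᵢ ‖gᵢ‖² = ∫ ρ_g dν`. As
`ρ_g = e^{k u_g}`, this integral is the mass `c`.
-/

open scoped ComplexOrder ComplexConjugate

section AMGM

variable {ι 𝕜 : Type*} [RCLike 𝕜]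

lemma prod_le_inv_card_mul_sum_pow_card (s : Finset ι) {z : ι → ℝ} (hz : ∀ i ∈ s, 0 ≤ z i) :
    ∏ i ∈ s, z i ≤ ((s.card : ℝ)⁻¹ * ∑ i ∈ s, z i) ^ s.card := by
  obtain rfl | hs := s.eq_empty_or_nonempty
  · simp
  have hcard : s.card ≠ 0 := hs.card_ne_zero
  have hmean := Real.geom_mean_le_arith_mean s (fun _ ↦ 1) z (fun _ _ ↦ zero_le_one)
    (by simpa using hs) hz
  simp only [Real.rpow_one, one_mul, Finset.sum_const, nsmul_eq_mul, mul_one] at hmean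
  calc ∏ i ∈ s, z i
      = ((∏ i ∈ s, z i) ^ (s.card : ℝ)⁻¹) ^ s.card :=
        (Real.rpow_inv_natCast_pow (Finset.prod_nonneg hz) hcard).symm
    _ ≤ ((s.card : ℝ)⁻¹ * ∑ i ∈ s, z i) ^ s.card := by
        rw [← div_eq_inv_mul]
        gcongr
        exact Real.rpow_nonneg (Finset.prod_nonneg hz) _

lemma det_le_inv_card_mul_trace_pow_card [Fintype ι] [DecidableEq ι] {A : Matrix ι ι 𝕜}
    (hA : A.PosSemidef) :
    A.det ≤ ((Fintype.card ι : 𝕜)⁻¹ * A.trace) ^ Fintype.card ι := by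
  rw [hA.isHermitian.det_eq_prod_eigenvalues, hA.isHermitian.trace_eq_sum_eigenvalues]
  have hprod := prod_le_inv_card_mul_sum_pow_card Finset.univ fun i _ ↦ hA.eigenvalues_nonneg i
  rw [Finset.card_univ, ← RCLike.ofReal_le_ofReal (K := 𝕜)] at hprod
  simpa using hprod

end AMGM

section Gram

variable {E ι κ 𝕜 : Type*} [RCLike 𝕜] [SeminormedAddCommGroup E] [InnerProductSpace 𝕜 E]

lemma gram_sum_smul [Fintype ι] (C : Matrix κ ι 𝕜) (u : ι → E) :
    gram 𝕜 (fun i ↦ ∑ l, C i l • u l) = C.map conj * gram 𝕜 u * Cᵀ := by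
  ext i j
  simp only [gram_apply, sum_inner, inner_sum, inner_smul_left, inner_smul_right, mul_apply,
    map_apply, transpose_apply, Finset.sum_mul, Finset.mul_sum]
  exact Finset.sum_congr rfl fun _ _ ↦ Finset.sum_congr rfl fun _ _ ↦ by ring

variable [Fintype ι]

lemma trace_gram (u : ι → E) : (gram 𝕜 u).trace = ((∑ i, ‖u i‖ ^ 2 : ℝ) : 𝕜) := by
  simp [trace, inner_self_eq_norm_sq_to_K]

variable [DecidableEq ι]

lemma det_gram_sum_smul (C : Matrix ι ι 𝕜) (u : ι → E) :
    (gram 𝕜 fun i ↦ ∑ l, C i l • u l).det = ((‖C.det‖ ^ 2 : ℝ) : 𝕜) * (gram 𝕜 u).det := by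
  have hconj : (C.map conj).det = conj C.det := ((starRingEnd 𝕜).map_det C).symm
  rw [gram_sum_smul, det_mul, det_mul, det_transpose, hconj, mul_right_comm, RCLike.conj_mul]
  norm_cast

lemma det_gram_le_mean_norm_sq_pow_card (u : ι → E) :
    (gram 𝕜 u).det ≤
      ((((Fintype.card ι : ℝ)⁻¹ * ∑ i, ‖u i‖ ^ 2) ^ Fintype.card ι : ℝ) : 𝕜) := by
  simpa [trace_gram] using det_le_inv_card_mul_trace_pow_card (posSemidef_gram 𝕜 u)

lemma det_gram_le_inv_det_sq_mul {C : Matrix ι ι 𝕜} (hC : IsUnit C.det) (u : ι → E) :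
    (gram 𝕜 u).det ≤ (((‖C.det‖ ^ 2)⁻¹ *
      ((Fintype.card ι : ℝ)⁻¹ * ∑ i, ‖∑ l, C i l • u l‖ ^ 2) ^ Fintype.card ι : ℝ) : 𝕜) := by
  have hdet : 0 < ‖C.det‖ ^ 2 := pow_pos (norm_pos_iff.mpr hC.ne_zero) 2
  have hinv : (gram 𝕜 u).det =
      (((‖C.det‖ ^ 2)⁻¹ : ℝ) : 𝕜) * (gram 𝕜 fun i ↦ ∑ l, C i l • u l).det := by
    rw [det_gram_sum_smul, ← mul_assoc, ← RCLike.ofReal_mul, inv_mul_cancel₀ hdet.ne',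
      RCLike.ofReal_one, one_mul]
  rw [hinv, RCLike.ofReal_mul]
  exact mul_le_mul_of_nonneg_left (det_gram_le_mean_norm_sq_pow_card _)
    (RCLike.ofReal_nonneg.mpr (inv_nonneg.mpr hdet.le))

end Gram

section L2

variable {X ι κ 𝕜 : Type*} [RCLike 𝕜] [MeasurableSpace X] {μ : Measure X}

lemma inner_toLp {E : Type*} [NormedAddCommGroup E] [InnerProductSpace 𝕜 E] {f g : X → E}
    (hf : MemLp f 2 μ) (hg : MemLp g 2 μ) :
    inner 𝕜 (hf.toLp f) (hg.toLp g) = ∫ x, inner 𝕜 (f x) (g x) ∂μ := by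
  rw [L2.inner_def]
  refine integral_congr_ae ?_
  filter_upwards [hf.coeFn_toLp, hg.coeFn_toLp] with x hfx hgx
  rw [hfx, hgx]

lemma norm_toLp_sq {E : Type*} [NormedAddCommGroup E] {f : X → E} (hf : MemLp f 2 μ) :
    ‖hf.toLp f‖ ^ 2 = ∫ x, ‖f x‖ ^ 2 ∂μ := by
  have hnonneg : 0 ≤ ∫ x, ‖f x‖ ^ 2 ∂μ := integral_nonneg fun _ ↦ sq_nonneg _
  rw [Lp.norm_toLp, hf.eLpNorm_eq_integral_rpow_norm two_ne_zero ofNat_ne_top]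
  simp only [toReal_ofNat, Real.rpow_two]
  rw [toReal_ofReal (Real.rpow_nonneg hnonneg _)]
  exact Real.rpow_inv_natCast_pow hnonneg two_ne_zero

lemma integrable_mul_conj {f g : X → 𝕜} (hf : MemLp f 2 μ) (hg : MemLp g 2 μ) :
    Integrable (fun x ↦ f x * conj (g x)) μ :=
  hf.integrable_mul hg.star

lemma toLp_finsetSum {E : Type*} [NormedAddCommGroup E] {p : ℝ≥0∞} (s : Finset ι)
    {f : ι → X → E} (hf : ∀ i, MemLp (f i) p μ) :
    (memLp_finsetSum s fun i _ ↦ hf i).toLp _ = ∑ i ∈ s, (hf i).toLp (f i) := by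
  classical
  induction s using Finset.induction_on with
  | empty => rfl
  | insert i s hi ih =>
    rw [Finset.sum_insert hi, ← ih, ← MemLp.toLp_add]
    exact MemLp.toLp_congr _ _ (.of_forall fun x ↦ by simp [Finset.sum_insert hi])

variable [Fintype ι]

lemma memLp_two_of_integrable_mean_norm_sq {E : Type*} [NormedAddCommGroup E]
    {g : ι → X → E} (hg : ∀ i, AEStronglyMeasurable (g i) μ)
    (hint : Integrable (fun x ↦ (Fintype.card ι : ℝ)⁻¹ * ∑ i, ‖g i x‖ ^ 2) μ) (i : ι) :
    MemLp (g i) 2 μ := by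
  have : Nonempty ι := ⟨i⟩
  have hcard : IsUnit (Fintype.card ι : ℝ)⁻¹ := by simp
  have hsum := (integrable_const_mul_iff hcard _).mp hint
  refine (memLp_two_iff_integrable_sq_norm (hg i)).mpr (hsum.mono' ((hg i).norm.pow 2) ?_)
  refine .of_forall fun x ↦ ?_
  rw [Real.norm_of_nonneg (sq_nonneg _)]
  exact Finset.single_le_sum (f := fun j ↦ ‖g j x‖ ^ 2) (fun _ _ ↦ sq_nonneg _) (Finset.mem_univ i)

lemma memLp_sum_mul (C : Matrix κ ι 𝕜) {p : ℝ≥0∞} {f : ι → X → 𝕜} (hf : ∀ i, MemLp (f i) p μ)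
    (i : κ) : MemLp (fun x ↦ ∑ l, C i l * f l x) p μ :=
  memLp_finsetSum _ fun l _ ↦ (hf l).const_mul (C i l)

lemma toLp_sum_mul (C : Matrix κ ι 𝕜) {p : ℝ≥0∞} {f : ι → X → 𝕜} (hf : ∀ i, MemLp (f i) p μ)
    (i : κ) : (memLp_sum_mul C hf i).toLp _ = ∑ l, C i l • (hf l).toLp (f l) :=
  toLp_finsetSum Finset.univ fun l ↦ (hf l).const_mul (C i l)

lemma memLp_of_memLp_sum_mul [DecidableEq ι] {C : Matrix ι ι 𝕜} (hC : IsUnit C.det) {p : ℝ≥0∞}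
    {f : ι → X → 𝕜} (hg : ∀ i, MemLp (fun x ↦ ∑ l, C i l * f l x) p μ) (i : ι) :
    MemLp (f i) p μ := by
  have hf : (fun x ↦ ∑ l, C⁻¹ i l * ∑ m, C l m * f m x) = f i := by
    ext x
    have h : C⁻¹ *ᵥ (C *ᵥ fun m ↦ f m x) = fun m ↦ f m x := by
      rw [mulVec_mulVec, nonsing_inv_mul _ hC, one_mulVec]
    exact congrFun h i
  exact hf ▸ memLp_sum_mul C⁻¹ hg i

lemma det_integral_mul_conj_le_inv_det_sq_mul [DecidableEq ι] {C : Matrix ι ι 𝕜} (hC : IsUnit C.det)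
    {f : ι → X → 𝕜} (hf : ∀ i, MemLp (f i) 2 μ) :
    (of fun i j ↦ ∫ x, f i x * conj (f j x) ∂μ).det ≤ (((‖C.det‖ ^ 2)⁻¹ *
      (∫ x, (Fintype.card ι : ℝ)⁻¹ * ∑ i, ‖∑ l, C i l * f l x‖ ^ 2 ∂μ)
        ^ Fintype.card ι : ℝ) : 𝕜) := by
  have hgram : (of fun i j ↦ ∫ x, f i x * conj (f j x) ∂μ) =
      (gram 𝕜 fun i ↦ (hf i).toLp (f i))ᵀ := by
    ext i j
    rw [transpose_apply, gram_apply, inner_toLp, of_apply]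
    simp only [RCLike.inner_apply]
  have hnorm : ∑ i, ‖∑ l, C i l • (hf l).toLp (f l)‖ ^ 2 =
      ∫ x, ∑ i, ‖∑ l, C i l * f l x‖ ^ 2 ∂μ := by
    rw [integral_finsetSum _ fun i _ ↦ (memLp_sum_mul C hf i).integrable_norm_pow two_ne_zero]
    simp only [← toLp_sum_mul, norm_toLp_sq]
  rw [hgram, det_transpose, integral_const_mul, ← hnorm]
  exact det_gram_le_inv_det_sq_mul hC _

end L2

section Weighted

variable {X ι 𝕜 : Type*} [RCLike 𝕜] [MeasurableSpace X] {μ : Measure X} {w : X → ℝ}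

lemma integrable_withDensity_ofReal_iff {E : Type*} [NormedAddCommGroup E] [NormedSpace ℝ E]
    (hw : AEMeasurable w μ) (hw_nonneg : ∀ x, 0 ≤ w x) {f : X → E} :
    Integrable f (μ.withDensity fun x ↦ ENNReal.ofReal (w x)) ↔
      Integrable (fun x ↦ w x • f x) μ := by
  simp only [integrable_withDensity_iff_integrable_smul₀' hw.ennreal_ofReal
    (.of_forall fun _ ↦ ofReal_lt_top), toReal_ofReal (hw_nonneg _)]

lemma integral_withDensity_ofReal {E : Type*} [NormedAddCommGroup E] [NormedSpace ℝ E]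
    (hw : AEMeasurable w μ) (hw_nonneg : ∀ x, 0 ≤ w x) (f : X → E) :
    ∫ x, f x ∂(μ.withDensity fun x ↦ ENNReal.ofReal (w x)) = ∫ x, w x • f x ∂μ := by
  simp only [integral_withDensity_eq_integral_toReal_smul₀ hw.ennreal_ofReal
    (.of_forall fun _ ↦ ofReal_lt_top), toReal_ofReal (hw_nonneg _)]

theorem integrable_and_det_integral_mul_conj_mul_weight_le [Fintype ι] [DecidableEq ι]
    {C : Matrix ι ι 𝕜} (hC : IsUnit C.det) {f : ι → X → 𝕜} (hf : ∀ i, AEMeasurable (f i) μ)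
    (hw : AEMeasurable w μ) (hw_nonneg : ∀ x, 0 ≤ w x)
    (hint : Integrable
      (fun x ↦ w x * ((Fintype.card ι : ℝ)⁻¹ * ∑ i, ‖∑ l, C i l * f l x‖ ^ 2)) μ) :
    (∀ i j, Integrable (fun x ↦ f i x * conj (f j x) * (w x : 𝕜)) μ) ∧
    (of fun i j ↦ ∫ x, f i x * conj (f j x) * (w x : 𝕜) ∂μ).det ≤ (((‖C.det‖ ^ 2)⁻¹ *
      (∫ x, w x * ((Fintype.card ι : ℝ)⁻¹ * ∑ i, ‖∑ l, C i l * f l x‖ ^ 2) ∂μ)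
        ^ Fintype.card ι : ℝ) : 𝕜) := by
  set ν := μ.withDensity fun x ↦ ENNReal.ofReal (w x)
  have hfν (i) : AEMeasurable (f i) ν := (hf i).mono_ac (withDensity_absolutelyContinuous _ _)
  have hLp : ∀ i, MemLp (f i) 2 ν := memLp_of_memLp_sum_mul hC <|
    memLp_two_of_integrable_mean_norm_sq (by fun_prop)
      ((integrable_withDensity_ofReal_iff hw hw_nonneg).mpr hint)
  have hweight (i j x) : f i x * conj (f j x) * (w x : 𝕜) = w x • (f i x * conj (f j x)) := by
    rw [RCLike.real_smul_eq_coe_mul, mul_comm]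
  simp only [hweight, ← smul_eq_mul (a := w _), ← integrable_withDensity_ofReal_iff hw hw_nonneg,
    ← integral_withDensity_ofReal hw hw_nonneg]
  exact ⟨fun i j ↦ integrable_mul_conj (hLp i) (hLp j),
    det_integral_mul_conj_le_inv_det_sq_mul hC hLp⟩

end Weighted

lemma exp_mul_eq_exp_of_eq_inv_mul_log {ρ k γ t u : ℝ} (hρ : 0 < ρ) (hk : k ≠ 0)
    (hu : u = k⁻¹ * Real.log ρ) :
    Real.exp (-(k + γ) * u - t) * ρ = Real.exp (-(γ * u + t)) := by
  have hexp : ρ = Real.exp (k * u) := by rw [hu, mul_inv_cancel_left₀ hk, Real.exp_log hρ]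
  rw [hexp, ← Real.exp_add]
  ring_nf

lemma exists_eq_ofReal_and_le {z : ℂ} {r : ℝ} (h : z ≤ (r : ℂ)) : ∃ d : ℝ, z = d ∧ d ≤ r :=
  ⟨z.re, Complex.ext rfl (Complex.le_def.mp h).2, (Complex.le_def.mp h).1⟩

theorem gram_det_le_inv_det_sq_mul_mass_pow_general
    {X ι 𝕜 : Type*} [RCLike 𝕜] [Fintype ι] [DecidableEq ι] [MeasurableSpace X] {μ₀ : Measure X}
    {γ k : ℝ} (hk : k ≠ 0)
    {f : ι → X → 𝕜} (hf : ∀ i, AEMeasurable (f i) μ₀)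
    {v : X → ℝ} (hv : AEMeasurable v μ₀)
    {C : Matrix ι ι 𝕜} (hC : IsUnit C.det)
    {g : ι → X → 𝕜} (hg : g = fun i x ↦ ∑ l, C i l * f l x)
    {ρg : X → ℝ} (hρg : ρg = fun x ↦ (Fintype.card ι : ℝ)⁻¹ * ∑ i, ‖g i x‖ ^ 2)
    (hpos : ∀ᵐ x ∂μ₀, 0 < ρg x)
    {ug : X → ℝ} (hug : ug = fun x ↦ k⁻¹ * Real.log (ρg x))
    {c : ℝ≥0∞}
    (hc : c = ∫⁻ x, ENNReal.ofReal (Real.exp (-(γ * ug x + (1 - γ) * v x))) ∂μ₀)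
    (hctop : c < ⊤) :
    (∀ i j, Integrable (fun x ↦ f i x * conj (f j x) *
        (Real.exp (-(k + γ) * ug x - (1 - γ) * v x) : 𝕜)) μ₀) ∧
    (of fun i j ↦ ∫ x, f i x * conj (f j x) *
        (Real.exp (-(k + γ) * ug x - (1 - γ) * v x) : 𝕜) ∂μ₀).det ≤
      (((‖C.det‖ ^ 2)⁻¹ * c.toReal ^ Fintype.card ι : ℝ) : 𝕜) := by
  have hug_meas : AEMeasurable ug μ₀ := by
    subst hug hρg hg
    fun_prop
  have hmass_meas :
      AEStronglyMeasurable (fun x ↦ Real.exp (-(γ * ug x + (1 - γ) * v x))) μ₀ :=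
    AEMeasurable.aestronglyMeasurable (by fun_prop)
  have hmass_integrable : Integrable (fun x ↦ Real.exp (-(γ * ug x + (1 - γ) * v x))) μ₀ :=
    (lintegral_ofReal_ne_top_iff_integrable hmass_meas (.of_forall fun _ ↦ Real.exp_nonneg _)).mp
      (hc ▸ hctop.ne)
  have hweight : (fun x ↦ Real.exp (-(k + γ) * ug x - (1 - γ) * v x) * ρg x) =ᵐ[μ₀]
      fun x ↦ Real.exp (-(γ * ug x + (1 - γ) * v x)) := by
    filter_upwards [hpos] with x hx
    exact exp_mul_eq_exp_of_eq_inv_mul_log hx hk (congrFun hug x)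
  have hmass : c.toReal = ∫ x, Real.exp (-(k + γ) * ug x - (1 - γ) * v x) * ρg x ∂μ₀ := by
    rw [integral_congr_ae hweight, hc, integral_eq_lintegral_of_nonneg_ae
      (.of_forall fun _ ↦ Real.exp_nonneg _) hmass_meas]
  have hint := hmass_integrable.congr hweight.symm
  rw [hmass]
  subst hρg hg
  exact integrable_and_det_integral_mul_conj_mul_weight_le hC hf (by fun_prop)
    (fun _ ↦ Real.exp_nonneg _) hint

/-- Trivialized form of the second inequality in the proof of Proposition 3.1:
the Gram matrix `G'` of the `fᵢ` weighted by `e^{-(k+γ)u_g - (1-γ)v}` is well defined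
and satisfies `det G' ≤ |det C|⁻² · c^N`. -/
theorem gram_det_le_inv_det_sq_mul_mass_pow
    {X : Type*} [MeasurableSpace X] (μ₀ : Measure X)
    (γ k : ℝ) (hγ : 0 < γ) (hk : 0 < k)
    (N : ℕ) (hN : 0 < N)
    (f : Fin N → X → ℂ) (hf : ∀ i, Measurable (f i))
    (v : X → ℝ) (hv : Measurable v)
    (C : Matrix (Fin N) (Fin N) ℂ) (hC : IsUnit C.det)
    (g : Fin N → X → ℂ) (hg : g = fun i x => ∑ l, C i l * f l x)
    (ρg : X → ℝ) (hρg : ρg = fun x => (N : ℝ)⁻¹ * ∑ i, ‖g i x‖ ^ 2)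
    (hpos : ∀ᵐ x ∂μ₀, 0 < ρg x)
    (ug : X → ℝ) (hug : ug = fun x => k⁻¹ * Real.log (ρg x))
    (c : ℝ≥0∞)
    (hc : c = ∫⁻ x, ENNReal.ofReal (Real.exp (-(γ * ug x + (1 - γ) * v x))) ∂μ₀)
    (hctop : c < ⊤)
    (G' : Matrix (Fin N) (Fin N) ℂ)
    (hG' : G' = Matrix.of fun i j =>
      ∫ x, f i x * (starRingEnd ℂ) (f j x) *
        (Real.exp (-(k + γ) * ug x - (1 - γ) * v x) : ℂ) ∂μ₀) :
    (∀ i j, Integrable (fun x => f i x * (starRingEnd ℂ) (f j x) *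
        (Real.exp (-(k + γ) * ug x - (1 - γ) * v x) : ℂ)) μ₀) ∧
    ∃ d : ℝ, G'.det = (d : ℂ) ∧ d ≤ (‖C.det‖ ^ 2)⁻¹ * c.toReal ^ N := by
  subst hG'
  exact (gram_det_le_inv_det_sq_mul_mass_pow_general hk.ne' (fun i ↦ (hf i).aemeasurable)
    hv.aemeasurable hC hg (by simpa using hρg) hpos hug hc hctop).imp_right
    fun h ↦ by simpa using exists_eq_ofReal_and_le h
end
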